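/- Let n ≥ 1 and let f be a continuous map from the unit n-sphere S^n ⊆ ℝ^{n+1} to ℝ^n. Then there exists a nonempty subset A ⊆ S^n such that A and its antipodal set -A = {-x : x ∈ A} are disjoint (hence antipodal regions) and the images satisfy f(A) = f(-A), i.e. f '' A = f '' (-A). -/

import Mathlib

/-!
Let `f₁, …, fₙ` be real polynomials in `n` variables of degree at most an odd number `d`, and let
`s` be real. The quotient by the polynomials `X i ^ d + s * fᵢ` has dimension `d ^ n`, with the
monomials of exponents less than `d` as a basis, as soon as the maps `1 + s • U` are bijective,
where `U` replaces a factor `X i ^ d` by `fᵢ`. Since `U` preserves the finite-dimensional space of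
polynomials of degree at most `D`, for each `D`, this fails only for countably many `s`. Otherwise
the multiplications by the variables on this odd-dimensional algebra have a common eigenvector, and
the eigenvalues are a real zero of all `X i ^ d + s * fᵢ`.

Letting `s` tend to infinity, compactness yields Pfister's theorem: `n` real forms of the same odd
degree in `n + 1` variables have a common zero on the unit sphere. By Stone-Weierstrass it extends
to odd continuous maps from the `n`-sphere to `ℝⁿ`, such as `x ↦ f x - f (-x)`.
-/

open Module

section RealClosed

open Polynomial

theorem exists_real_isRoot_of_odd_natDegree {p : ℝ[X]} (hp : Odd p.natDegree) :
    ∃ x, p.IsRoot x := by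
  wlog hlead : 0 ≤ p.leadingCoeff generalizing p
  · obtain ⟨x, hx⟩ := this (p := -p) (by rwa [natDegree_neg])
      (by rw [leadingCoeff_neg]; linarith)
    exact ⟨x, by simpa using hx⟩
  have hdeg : 0 < p.degree := natDegree_pos_iff_degree_pos.mp hp.pos
  have htop : Filter.Tendsto (fun x => p.eval x) Filter.atTop Filter.atTop :=
    p.tendsto_atTop_of_leadingCoeff_nonneg hdeg hlead
  have hbot : Filter.Tendsto (fun x => (p.comp (-X)).eval x) Filter.atTop Filter.atBot := by
    refine tendsto_atBot_of_leadingCoeff_nonpos _ ?_ ?_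
    · rw [← natDegree_pos_iff_degree_pos, natDegree_comp]
      simpa using hp.pos
    · rw [leadingCoeff_comp (by simp)]
      simpa [hp.neg_one_pow] using hlead
  obtain ⟨a, ha⟩ := (htop.eventually_ge_atTop 0).exists
  obtain ⟨b, hb⟩ := (hbot.eventually_le_atBot 0).exists
  exact mem_range_of_exists_le_of_exists_ge p.continuous ⟨-b, by simpa using hb⟩ ⟨a, ha⟩

instance : IsRealClosed ℝ :=
  .of_linearOrderedField Real.isSquare_iff.mpr exists_real_isRoot_of_odd_natDegree

variable {K V ι : Type*} [Field K] [IsRealClosed K] [AddCommGroup V] [Module K V]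

theorem exists_invtSubmodule_odd_finrank_lt (hV : Odd (finrank K V)) {T : End K V}
    (hT : ∀ c : K, T ≠ c • (1 : End K V)) :
    ∃ W : Submodule K V, Odd (finrank K W) ∧ finrank K W < finrank K V ∧
      ∀ S, Commute S T → W ∈ S.invtSubmodule := by
  have : FiniteDimensional K V := .of_finrank_pos hV.pos
  obtain ⟨c, hc⟩ := IsRealClosed.exists_isRoot_of_odd_natDegree (f := T.charpoly)
    (by rwa [LinearMap.charpoly_natDegree])
  set N := T - c • (1 : End K V) with hN
  have hker : 0 < finrank K N.ker := by
    rw [Nat.pos_iff_ne_zero, Ne, Submodule.finrank_eq_zero, hN, ← End.eigenspace_def]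
    exact (End.hasEigenvalue_iff_isRoot_charpoly T c).mpr hc
  have hrange : 0 < finrank K N.range := by
    rw [Nat.pos_iff_ne_zero, Ne, Submodule.finrank_eq_zero, LinearMap.range_eq_bot]
    exact sub_ne_zero.mpr (hT c)
  have hcomm {S : End K V} (hS : Commute S T) (v : V) : S (N v) = N (S v) :=
    LinearMap.congr_fun (hS.sub_right ((Commute.one_right S).smul_right c)).eq v
  have hrank := N.finrank_range_add_finrank_ker
  rcases Nat.even_or_odd (finrank K N.range) with heven | hodd
  · refine ⟨N.ker, ?_, by omega, fun S hS v hv => ?_⟩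
    · rw [← hrank] at hV
      exact (Nat.odd_add'.mp hV).mpr heven
    · rw [Submodule.mem_comap, LinearMap.mem_ker, ← hcomm hS, LinearMap.mem_ker.mp hv, map_zero]
  · refine ⟨N.range, hodd, by omega, fun S hS => ?_⟩
    rintro _ ⟨v, rfl⟩
    exact ⟨S v, (hcomm hS v).symm⟩

theorem exists_common_eigenvector (hV : Odd (finrank K V)) (T : ι → End K V)
    (hT : ∀ i j, Commute (T i) (T j)) :
    ∃ v : V, v ≠ 0 ∧ ∃ c : ι → K, ∀ i, T i v = c i • v := by
  induction h : finrank K V using Nat.strong_induction_on generalizing V with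
  | _ N ih =>
  subst h
  by_cases hscalar : ∀ i, ∃ c : K, T i = c • (1 : End K V)
  · choose c hc using hscalar
    have : Nontrivial V := nontrivial_of_finrank_pos hV.pos
    obtain ⟨v, hv⟩ := exists_ne (0 : V)
    exact ⟨v, hv, c, fun i => by rw [hc, LinearMap.smul_apply, End.one_apply]⟩
  · push Not at hscalar
    obtain ⟨i, hi⟩ := hscalar
    obtain ⟨W, hodd, hlt, hinv⟩ := exists_invtSubmodule_odd_finrank_lt hV hi
    obtain ⟨v, hv, c, hc⟩ := ih _ hlt hodd (fun j => (T j).restrict (hinv (T j) (hT j i)))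
      (fun j k => LinearMap.ext fun w => Subtype.ext (LinearMap.congr_fun (hT j k).eq w)) rfl
    exact ⟨v, by simpa using hv, c, fun j => congrArg Subtype.val (hc j)⟩

theorem nonempty_algHom_of_odd_finrank {A : Type*} [CommRing A] [Algebra K A]
    (hA : Odd (finrank K A)) : Nonempty (A →ₐ[K] K) := by
  obtain ⟨v, hv, χ, hχ⟩ := exists_common_eigenvector hA (LinearMap.mulLeft K : A → End K A)
    (fun a b => LinearMap.ext fun x => mul_left_comm a b x)
  simp only [LinearMap.mulLeft_apply] at hχ
  have heq {a : A} {r : K} (h : a * v = r • v) : χ a = r :=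
    smul_left_injective K hv ((hχ a).symm.trans h)
  exact ⟨AlgHom.ofLinearMap
    { toFun := χ
      map_add' := fun a b => heq (by rw [add_mul, hχ, hχ, add_smul])
      map_smul' := fun r a => heq (by rw [smul_mul_assoc, hχ, smul_smul]; rfl) }
    (heq (by rw [one_mul, one_smul]))
    (fun a b => heq (by rw [mul_assoc, hχ, mul_smul_comm, hχ, smul_smul, mul_comm]; rfl))⟩

end RealClosed

section Perturbation

variable {K V : Type*} [Field K] [AddCommGroup V] [Module K V]

theorem finite_setOf_not_bijective_one_add_smul [FiniteDimensional K V] (u : End K V) :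
    {s : K | ¬ Function.Bijective (1 + s • u : End K V)}.Finite := by
  refine (u.finite_hasEigenvalue.image fun μ => -μ⁻¹).subset fun s hs => ?_
  have hninj : ¬ Function.Injective (1 + s • u : End K V) := fun h =>
    hs ⟨h, LinearMap.surjective_of_injective h⟩
  rw [injective_iff_map_eq_zero] at hninj
  push Not at hninj
  obtain ⟨v, hv, hv0⟩ := hninj
  have hsu : s • u v = -v := by
    rw [eq_neg_iff_add_eq_zero, add_comm]
    exact hv
  have hs0 : s ≠ 0 := by
    rintro rfl
    exact hv0 (by simpa using hsu.symm)
  refine ⟨-s⁻¹, End.hasEigenvalue_of_hasEigenvector (x := v) ⟨?_, hv0⟩, by simp⟩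
  rw [End.mem_eigenspace_iff, neg_smul, ← smul_neg, ← hsu, inv_smul_smul₀ hs0]

theorem countable_setOf_not_bijective_one_add_smul {ι : Type*} [Countable ι]
    {W : ι → Submodule K V} [∀ i, FiniteDimensional K (W i)] (hW : ∀ v, ∃ i, v ∈ W i)
    {u : End K V} (hu : ∀ i, W i ∈ u.invtSubmodule) :
    {s : K | ¬ Function.Bijective (1 + s • u : End K V)}.Countable := by
  refine (Set.countable_iUnion fun i =>
    (finite_setOf_not_bijective_one_add_smul (u.restrict (hu i))).countable).mono fun s hs => ?_
  contrapose! hs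
  simp only [Set.mem_iUnion, Set.mem_ofPred_eq, not_exists, not_not] at hs ⊢
  constructor
  · rw [injective_iff_map_eq_zero]
    intro v hv
    obtain ⟨i, hi⟩ := hW v
    exact congrArg Subtype.val ((injective_iff_map_eq_zero _).mp (hs i).1 ⟨v, hi⟩ (Subtype.ext hv))
  · intro v
    obtain ⟨i, hi⟩ := hW v
    obtain ⟨w, hw⟩ := (hs i).2 ⟨v, hi⟩
    exact ⟨w, congrArg Subtype.val hw⟩

end Perturbation

open MvPolynomial

section Division

variable {σ R : Type*} [CommSemiring R]

theorem basisMonomials_apply (m : σ →₀ ℕ) : basisMonomials σ R m = monomial m 1 := by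
  rw [coe_basisMonomials]

theorem isCompl_restrictSupport_compl (s : Set (σ →₀ ℕ)) :
    IsCompl (restrictSupport R s) (restrictSupport R sᶜ) :=
  (Submodule.orderIsoMapComap (AddMonoidAlgebra.coeffLinearEquiv R)).symm.isCompl
    ⟨Finsupp.disjoint_supported_supported disjoint_compl_right,
      Finsupp.codisjoint_supported_supported (codisjoint_iff.mpr (Set.union_compl_self s))⟩

theorem restrictSupport_le_iff {s : Set (σ →₀ ℕ)} {W : Submodule R (MvPolynomial σ R)} :
    restrictSupport R s ≤ W ↔ ∀ m ∈ s, monomial m 1 ∈ W := by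
  rw [restrictSupport_eq_span, Submodule.span_le, Set.image_subset_iff]
  rfl

theorem restrictScalars_span_le {A : Type*} [CommSemiring A] [Algebra R A] {s : Set A}
    {W : Submodule R A} (h : ∀ a, ∀ x ∈ s, a * x ∈ W) :
    (Ideal.span s).restrictScalars R ≤ W := fun _ hx =>
  Submodule.closure_induction W.zero_mem (fun _ _ _ _ => W.add_mem) h hx

/-- The exponents whose entries at the indices in `S` are less than `d`. -/
def reducedExponents (d : ℕ) (S : Set σ) : Set (σ →₀ ℕ) := {m | ∀ i ∈ S, m i < d}

theorem natCard_reducedExponents_univ [Finite σ] (d : ℕ) :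
    Nat.card (reducedExponents d (Set.univ : Set σ)) = d ^ Nat.card σ := by
  let e : reducedExponents d (Set.univ : Set σ) ≃ (σ → Fin d) :=
    { toFun := fun m i => ⟨m.1 i, m.2 i trivial⟩
      invFun := fun g => ⟨Finsupp.equivFunOnFinite.symm fun i => g i, fun i _ => (g i).2⟩
      left_inv := fun m => Subtype.ext (Finsupp.ext fun _ => rfl)
      right_inv := fun _ => rfl }
  rw [Nat.card_congr e, Nat.card_fun, Nat.card_fin]

variable {d : ℕ} {S : Set σ} {f : σ → MvPolynomial σ R} {i : σ} {r m : σ →₀ ℕ}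

/-- The ideal generated by the polynomials `X i ^ d + f i` with `i ∈ S`. -/
noncomputable def perturbedPowerIdeal (d : ℕ) (S : Set σ) (f : σ → MvPolynomial σ R) :
    Ideal (MvPolynomial σ R) :=
  Ideal.span ((fun i => X i ^ d + f i) '' S)

theorem add_mem_perturbedPowerIdeal (hi : i ∈ S) : X i ^ d + f i ∈ perturbedPowerIdeal d S f :=
  Ideal.subset_span (Set.mem_image_of_mem _ hi)

variable [LinearOrder σ] [WellFoundedLT σ]

open Classical in
/-- A single step of rewriting `X i ^ d` to `f i` for `i ∈ S`: on a monomial the step is applied at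
the least `i ∈ S` where the exponent is at least `d`; monomials without such an `i` are sent
to `0`. -/
noncomputable def rewriteStep (d : ℕ) (S : Set σ) (f : σ → MvPolynomial σ R) :
    End R (MvPolynomial σ R) :=
  (basisMonomials σ R).constr R fun m =>
    if h : {i ∈ S | d ≤ m i}.Nonempty then
      let i := wellFounded_lt.min {i ∈ S | d ≤ m i} h
      monomial (m - Finsupp.single i d) 1 * f i
    else 0

theorem exists_eq_add_single_of_notMem_reducedExponents (hm : m ∉ reducedExponents d S) :
    ∃ i ∈ S, ∃ r ∈ reducedExponents d (S ∩ Set.Iio i), m = r + Finsupp.single i d := by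
  have hne : {i ∈ S | d ≤ m i}.Nonempty := by
    simpa [reducedExponents, Set.Nonempty] using hm
  obtain ⟨hiS, hid⟩ := wellFounded_lt.min_mem _ hne
  set i := wellFounded_lt.min _ hne
  refine ⟨i, hiS, m - Finsupp.single i d, fun j hj => ?_, ?_⟩
  · have hjd : m j < d := not_le.mp fun h =>
      wellFounded_lt.not_lt_min {i ∈ S | d ≤ m i} ⟨hj.1, h⟩ hj.2
    exact tsub_le_self.trans_lt hjd
  · rw [tsub_add_cancel_of_le (Finsupp.single_le_iff.mpr hid)]

theorem rewriteStep_monomial_of_mem (hm : m ∈ reducedExponents d S) :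
    rewriteStep d S f (monomial m 1) = 0 := by
  rw [rewriteStep, ← basisMonomials_apply, Basis.constr_basis, dif_neg]
  rintro ⟨i, hiS, hid⟩
  exact (hm i hiS).not_ge hid

theorem rewriteStep_monomial_add_single (hi : i ∈ S) (hr : r ∈ reducedExponents d (S ∩ Set.Iio i)) :
    rewriteStep d S f (monomial (r + Finsupp.single i d) 1) = monomial r 1 * f i := by
  have hleast : IsLeast {j ∈ S | d ≤ (r + Finsupp.single i d) j} i := by
    refine ⟨⟨hi, by simp⟩, fun j ⟨hjS, hjd⟩ => not_lt.mp fun hji => ?_⟩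
    rw [Finsupp.add_apply, Finsupp.single_eq_of_ne hji.ne, add_zero] at hjd
    exact (hr j ⟨hjS, hji⟩).not_ge hjd
  have hmin : wellFounded_lt.min _ hleast.nonempty = i :=
    IsLeast.unique ⟨wellFounded_lt.min_mem _ _, fun _ h => wellFounded_lt.min_le h⟩ hleast
  rw [rewriteStep, ← basisMonomials_apply, Basis.constr_basis, dif_pos hleast.nonempty]
  simp only [hmin, add_tsub_cancel_right]

theorem rewriteStep_smul (s : R) : rewriteStep d S (s • f) = s • rewriteStep d S f := by
  refine (basisMonomials σ R).ext fun m => ?_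
  rw [coe_basisMonomials, LinearMap.smul_apply]
  by_cases hm : m ∈ reducedExponents d S
  · rw [rewriteStep_monomial_of_mem hm, rewriteStep_monomial_of_mem hm, smul_zero]
  · obtain ⟨i, hi, r, hr, rfl⟩ := exists_eq_add_single_of_notMem_reducedExponents hm
    rw [rewriteStep_monomial_add_single hi hr, rewriteStep_monomial_add_single hi hr,
      Pi.smul_apply, mul_smul_comm]

theorem restrictTotalDegree_mem_invtSubmodule_rewriteStep (hf : ∀ i, (f i).totalDegree ≤ d)
    (D : ℕ) : restrictTotalDegree σ R D ∈ (rewriteStep d S f).invtSubmodule := by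
  refine restrictSupport_le_iff.mpr fun m (hmD : m.degree ≤ D) => ?_
  rw [Submodule.mem_comap]
  by_cases hm : m ∈ reducedExponents d S
  · rw [rewriteStep_monomial_of_mem hm]
    exact Submodule.zero_mem _
  · obtain ⟨i, hi, r, hr, rfl⟩ := exists_eq_add_single_of_notMem_reducedExponents hm
    rw [rewriteStep_monomial_add_single hi hr, mem_restrictTotalDegree]
    calc (monomial r 1 * f i).totalDegree
        ≤ (monomial r (1 : R)).totalDegree + (f i).totalDegree := totalDegree_mul _ _
      _ ≤ r.degree + d := add_le_add (totalDegree_monomial_le _ _) (hf i)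
      _ = (r + Finsupp.single i d).degree := by simp
      _ ≤ D := hmD

theorem one_add_rewriteStep_apply_of_mem {p : MvPolynomial σ R}
    (hp : p ∈ restrictSupport R (reducedExponents d S)) : (1 + rewriteStep d S f) p = p := by
  suffices h : restrictSupport R (reducedExponents d S) ≤ (rewriteStep d S f).ker by
    rw [LinearMap.add_apply, LinearMap.mem_ker.mp (h hp), add_zero, End.one_apply]
  exact restrictSupport_le_iff.mpr fun m hm => rewriteStep_monomial_of_mem hm

theorem one_add_rewriteStep_monomial_add_single (hi : i ∈ S)
    (hr : r ∈ reducedExponents d (S ∩ Set.Iio i)) :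
    (1 + rewriteStep d S f) (monomial (r + Finsupp.single i d) 1) =
      monomial r 1 * (X i ^ d + f i) := by
  rw [LinearMap.add_apply, End.one_apply, rewriteStep_monomial_add_single hi hr, mul_add,
    X_pow_eq_monomial, monomial_mul, one_mul]

theorem map_compl_reducedExponents_le :
    (restrictSupport R (reducedExponents d S)ᶜ).map (1 + rewriteStep d S f) ≤
      (perturbedPowerIdeal d S f).restrictScalars R := by
  refine Submodule.map_le_iff_le_comap.mpr (restrictSupport_le_iff.mpr fun m hm => ?_)
  obtain ⟨i, hi, r, hr, rfl⟩ := exists_eq_add_single_of_notMem_reducedExponents hm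
  rw [Submodule.mem_comap, one_add_rewriteStep_monomial_add_single hi hr]
  exact Ideal.mul_mem_left _ _ (add_mem_perturbedPowerIdeal hi)

theorem restrictSupport_sup_perturbedPowerIdeal
    (hsurj : Function.Surjective (1 + rewriteStep d S f : End R (MvPolynomial σ R))) :
    restrictSupport R (reducedExponents d S) ⊔ (perturbedPowerIdeal d S f).restrictScalars R =
      ⊤ := by
  refine eq_top_iff.mpr fun p _ => ?_
  obtain ⟨q, rfl⟩ := hsurj p
  obtain ⟨a, ha, b, hb, rfl⟩ := Submodule.mem_sup.mp
    ((isCompl_restrictSupport_compl (R := R) (reducedExponents d S)).sup_eq_top ▸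
      Submodule.mem_top (x := q))
  rw [map_add, one_add_rewriteStep_apply_of_mem ha]
  exact Submodule.add_mem_sup ha (map_compl_reducedExponents_le (Submodule.mem_map_of_mem hb))

theorem mul_mem_map_compl_reducedExponents
    (hsurj : ∀ i, Function.Surjective
      (1 + rewriteStep d (Set.Iio i) f : End R (MvPolynomial σ R)))
    (p : MvPolynomial σ R) (i : σ) :
    p * (X i ^ d + f i) ∈
      (restrictSupport R (reducedExponents d Set.univ)ᶜ).map (1 + rewriteStep d Set.univ f) := by
  induction i using WellFoundedLT.induction generalizing p with
  | _ i ih =>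
  -- Divide `p` by the ideal of the smaller indices. A reduced monomial `r` in the remainder has `i`
  -- as the least index to rewrite in `r + single i d`; in a multiple of `X j ^ d + f j` with
  -- `j < i`, the factor `X i ^ d + f i` is absorbed into the cofactor.
  obtain ⟨a, ha, b, hb, rfl⟩ := Submodule.mem_sup.mp
    (restrictSupport_sup_perturbedPowerIdeal (hsurj i) ▸ Submodule.mem_top (x := p))
  rw [add_mul]
  refine Submodule.add_mem _ ?_ ?_
  · suffices h : restrictSupport R (reducedExponents d (Set.Iio i)) ≤
        ((restrictSupport R (reducedExponents d Set.univ)ᶜ).map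
          (1 + rewriteStep d Set.univ f)).comap (LinearMap.mulRight R (X i ^ d + f i)) from h ha
    refine restrictSupport_le_iff.mpr fun r hr => ?_
    rw [Submodule.mem_comap, LinearMap.mulRight_apply, ← one_add_rewriteStep_monomial_add_single
      (Set.mem_univ i) (by rwa [Set.univ_inter])]
    refine Submodule.mem_map_of_mem ((monomial_mem_restrictSupport R).mpr (.inl fun h => ?_))
    simpa using h i trivial
  · refine restrictScalars_span_le ?_ (Ideal.mul_mem_right (X i ^ d + f i) _ hb)
    rintro c _ ⟨j, hj, rfl⟩
    exact ih j hj c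

theorem isCompl_restrictSupport_perturbedPowerIdeal
    (hbij : ∀ S, Function.Bijective (1 + rewriteStep d S f : End R (MvPolynomial σ R))) :
    IsCompl (restrictSupport R (reducedExponents d Set.univ))
      ((perturbedPowerIdeal d Set.univ f).restrictScalars R) := by
  let T : MvPolynomial σ R ≃ₗ[R] MvPolynomial σ R := .ofBijective _ (hbij Set.univ)
  have hred : (restrictSupport R (reducedExponents d Set.univ)).map T.toLinearMap =
      restrictSupport R (reducedExponents d Set.univ) :=
    SetLike.coe_injective (Set.EqOn.image_eq_self fun _ hp => one_add_rewriteStep_apply_of_mem hp)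
  have hideal : (restrictSupport R (reducedExponents d Set.univ)ᶜ).map T.toLinearMap =
      (perturbedPowerIdeal d Set.univ f).restrictScalars R := by
    refine map_compl_reducedExponents_le.antisymm (restrictScalars_span_le ?_)
    rintro p _ ⟨i, -, rfl⟩
    exact mul_mem_map_compl_reducedExponents (fun i => (hbij _).2) p i
  rw [← hred, ← hideal]
  exact (Submodule.orderIsoMapComap T).isCompl (isCompl_restrictSupport_compl _)

theorem finrank_quotient_perturbedPowerIdeal {R : Type*} [CommRing R] [Nontrivial R] [Finite σ]
    {f : σ → MvPolynomial σ R}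
    (hbij : ∀ S, Function.Bijective (1 + rewriteStep d S f : End R (MvPolynomial σ R))) :
    finrank R (MvPolynomial σ R ⧸ perturbedPowerIdeal d Set.univ f) = d ^ Nat.card σ := by
  rw [← natCard_reducedExponents_univ (σ := σ) d,
    ← finrank_eq_nat_card_basis (basisRestrictSupport R (reducedExponents d Set.univ))]
  exact ((Submodule.Quotient.restrictScalarsEquiv R _).symm ≪≫ₗ
    Submodule.quotientEquivOfIsCompl _ _
      (isCompl_restrictSupport_perturbedPowerIdeal hbij).symm).finrank_eq

end Division

section Zeros

variable {σ K : Type*} [Finite σ] {d : ℕ}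

theorem exists_forall_pow_add_eval_eq_zero [LinearOrder σ] [Field K] [IsRealClosed K]
    (hd : Odd d) {f : σ → MvPolynomial σ K}
    (hbij : ∀ S, Function.Bijective (1 + rewriteStep d S f : End K (MvPolynomial σ K))) :
    ∃ y : σ → K, ∀ i, y i ^ d + eval y (f i) = 0 := by
  have hodd : Odd (finrank K (MvPolynomial σ K ⧸ perturbedPowerIdeal d Set.univ f)) := by
    rw [finrank_quotient_perturbedPowerIdeal hbij]
    exact hd.pow
  obtain ⟨χ⟩ := nonempty_algHom_of_odd_finrank hodd
  let φ : MvPolynomial σ K →ₐ[K] K := χ.comp (Ideal.Quotient.mkₐ K _)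
  have hφ (p : MvPolynomial σ K) : φ p = eval (φ ∘ X) p :=
    AlgHom.congr_fun (aeval_unique φ) p
  refine ⟨φ ∘ X, fun i => ?_⟩
  have hker : φ (X i ^ d + f i) = 0 := by
    rw [AlgHom.comp_apply, Ideal.Quotient.mkₐ_eq_mk, Ideal.Quotient.eq_zero_iff_mem.mpr
      (add_mem_perturbedPowerIdeal (Set.mem_univ i)), map_zero]
  rwa [map_add, map_pow, hφ (f i)] at hker

theorem exists_gt_exists_forall_pow_add_mul_eval_eq_zero (hd : Odd d)
    {f : σ → MvPolynomial σ ℝ} (hf : ∀ i, (f i).totalDegree ≤ d) (M : ℝ) :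
    ∃ s > M, ∃ y : σ → ℝ, ∀ i, y i ^ d + s * eval y (f i) = 0 := by
  obtain ⟨_, _⟩ := exists_wellFoundedLT σ
  have hbad : {s : ℝ | ∃ S : Set σ, ¬ Function.Bijective
      (1 + s • rewriteStep d S f : End ℝ (MvPolynomial σ ℝ))}.Countable := by
    rw [Set.ofPred_exists]
    exact Set.countable_iUnion fun S => countable_setOf_not_bijective_one_add_smul
      (W := restrictTotalDegree σ ℝ)
      (fun p => ⟨p.totalDegree, (mem_restrictTotalDegree _ _ _).mpr le_rfl⟩)
      (restrictTotalDegree_mem_invtSubmodule_rewriteStep hf)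
  obtain ⟨s, hs, hsM⟩ := (hbad.dense_compl ℝ).exists_mem_open isOpen_Ioi
    (Set.nonempty_Ioi (a := M))
  obtain ⟨y, hy⟩ := exists_forall_pow_add_eval_eq_zero (f := s • f) hd fun S => by
    rw [rewriteStep_smul]
    exact not_not.mp fun h => hs ⟨S, h⟩
  exact ⟨s, hsM, y, by simpa only [Pi.smul_apply, smul_eval] using hy⟩

end Zeros

theorem exists_eq_zero_of_forall_exists_norm_lt {X E : Type*} [TopologicalSpace X]
    [NormedAddCommGroup E] {K : Set X} (hK : IsCompact K) {f : X → E} (hf : ContinuousOn f K)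
    (h : ∀ ε > 0, ∃ x ∈ K, ‖f x‖ < ε) : ∃ x ∈ K, f x = 0 := by
  refine (hK.image_of_continuousOn hf).isClosed.closure_subset (Metric.mem_closure_iff.mpr ?_)
  intro ε hε
  obtain ⟨x, hx, hlt⟩ := h ε hε
  exact ⟨f x, Set.mem_image_of_mem f hx, by rwa [dist_zero_left]⟩

section OddForms

theorem totalDegree_aeval_le {σ τ R : Type*} [CommSemiring R] {g : σ → MvPolynomial τ R} {e : ℕ}
    (hg : ∀ i, (g i).totalDegree ≤ e) (p : MvPolynomial σ R) :
    (aeval g p).totalDegree ≤ p.totalDegree * e := by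
  rw [aeval_def, eval₂_eq]
  refine totalDegree_finsetSum_le fun m hm => ?_
  calc (C (p.coeff m) * ∏ i ∈ m.support, g i ^ m i).totalDegree
      ≤ (C (σ := τ) (p.coeff m)).totalDegree + ∑ i ∈ m.support, (g i ^ m i).totalDegree :=
        (totalDegree_mul _ _).trans (add_le_add_right (totalDegree_finsetProd _ _) _)
    _ ≤ 0 + ∑ i ∈ m.support, m i * e := by
        gcongr with i
        · exact (totalDegree_C _).le
        · exact (totalDegree_pow _ _).trans (Nat.mul_le_mul_left _ (hg i))
    _ = m.degree * e := by rw [zero_add, ← Finset.sum_mul]; rfl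
    _ ≤ p.totalDegree * e := Nat.mul_le_mul_right _ (le_totalDegree hm)

theorem eval_smul_of_isHomogeneous {σ R : Type*} [CommSemiring R] {p : MvPolynomial σ R} {d : ℕ}
    (hp : p.IsHomogeneous d) (t : R) (x : σ → R) : eval (t • x) p = t ^ d * eval x p := by
  simp only [eval_eq, Finset.mul_sum, Pi.smul_apply, smul_eq_mul, mul_pow,
    Finset.prod_mul_distrib, Finset.prod_pow_eq_pow_sum]
  refine Finset.sum_congr rfl fun m hm => ?_
  rw [show ∑ i ∈ m.support, m i = d from hp.degree_eq_sum_deg_support hm |>.symm]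
  ring

variable {n d : ℕ}

theorem exists_mem_sphere_forall_abs_eval_lt (hd : Odd d)
    {F : Fin n → MvPolynomial (Fin (n + 1)) ℝ} (hF : ∀ i, (F i).IsHomogeneous d)
    {ε : ℝ} (hε : 0 < ε) :
    ∃ x ∈ Metric.sphere (0 : EuclideanSpace ℝ (Fin (n + 1))) 1,
      ∀ i, |eval x.ofLp (F i)| < ε := by
  let c : Fin (n + 1) → MvPolynomial (Fin n) ℝ := Fin.cons 1 X
  have hc (j) : (c j).totalDegree ≤ 1 := by
    cases j using Fin.cases <;> simp [c]
  obtain ⟨s, hs, y, hy⟩ := exists_gt_exists_forall_pow_add_mul_eval_eq_zero hd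
    (f := fun i => aeval c (F i))
    (fun i => (totalDegree_aeval_le hc _).trans ((mul_one _).trans_le (hF i).totalDegree_le)) ε⁻¹
  have hs0 : 0 < s := (inv_pos.mpr hε).trans hs
  let z : EuclideanSpace ℝ (Fin (n + 1)) := WithLp.toLp 2 (Fin.cons 1 y)
  have hz : 0 < ‖z‖ := by
    refine norm_pos_iff.mpr fun h => one_ne_zero (α := ℝ) ?_
    exact congrArg (fun w : EuclideanSpace ℝ (Fin (n + 1)) => w 0) h
  have heval (i) : eval y (aeval c (F i)) = eval z.ofLp (F i) := by
    have hcz (j) : aeval y (c j) = z j := by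
      cases j using Fin.cases <;> simp [c, z]
    exact (comp_aeval_apply c (aeval y) (F i)).trans (by rw [funext hcz]; rfl)
  refine ⟨‖z‖⁻¹ • z, by simp [norm_smul, hz.ne'], fun i => ?_⟩
  have hscale : s * eval (‖z‖⁻¹ • z).ofLp (F i) = -(‖z‖⁻¹ * y i) ^ d := by
    rw [WithLp.ofLp_smul, eval_smul_of_isHomogeneous (hF i), ← heval]
    linear_combination ‖z‖⁻¹ ^ d * hy i
  have hcoord : |‖z‖⁻¹ * y i| ≤ 1 := by
    rw [abs_mul, abs_of_pos (inv_pos.mpr hz), inv_mul_le_one₀ hz]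
    exact PiLp.norm_apply_le z i.succ
  calc |eval (‖z‖⁻¹ • z).ofLp (F i)| = |‖z‖⁻¹ * y i| ^ d / s := by
        rw [eq_div_iff hs0.ne', mul_comm, ← abs_pow, ← abs_neg ((_ : ℝ) ^ d), ← hscale, abs_mul,
          abs_of_pos hs0]
    _ ≤ 1 / s := by gcongr; exact pow_le_one₀ (abs_nonneg _) hcoord
    _ < ε := by rw [one_div]; exact inv_lt_of_inv_lt₀ hε hs

theorem exists_mem_sphere_forall_eval_eq_zero (hd : Odd d)
    {F : Fin n → MvPolynomial (Fin (n + 1)) ℝ} (hF : ∀ i, (F i).IsHomogeneous d) :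
    ∃ x ∈ Metric.sphere (0 : EuclideanSpace ℝ (Fin (n + 1))) 1, ∀ i, eval x.ofLp (F i) = 0 := by
  have hcont : Continuous fun x : EuclideanSpace ℝ (Fin (n + 1)) =>
      fun i => eval x.ofLp (F i) :=
    continuous_pi fun i => (F i).continuous_eval.comp (PiLp.continuous_ofLp 2 _)
  obtain ⟨x, hx, h⟩ := exists_eq_zero_of_forall_exists_norm_lt (isCompact_sphere _ _)
    hcont.continuousOn fun ε hε => by
      obtain ⟨x, hx, h⟩ := exists_mem_sphere_forall_abs_eval_lt hd hF hε
      exact ⟨x, hx, (pi_norm_lt_iff hε).mpr h⟩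
  exact ⟨x, hx, congrFun h⟩

end OddForms

section OddPart

theorem eval_eq_sum_homogeneousComponent {σ R : Type*} [CommSemiring R] {d : ℕ}
    {p : MvPolynomial σ R} (hp : p.totalDegree ≤ d) (x : σ → R) :
    eval x p = ∑ m ∈ Finset.range (d + 1), eval x (homogeneousComponent m p) := by
  conv_lhs => rw [← sum_homogeneousComponent p, map_sum]
  refine Finset.sum_subset (Finset.range_mono (by omega)) fun m _ hm => ?_
  rw [homogeneousComponent_eq_zero _ _ (by simpa using hm), map_zero]

variable {σ R : Type*} [Fintype σ] [CommRing R]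

/-- The homogeneous polynomial of odd degree `d` which restricts on the unit sphere to the odd part
of a polynomial `p` of total degree at most `d`: every homogeneous component of `p` of odd degree is
brought to degree `d` by multiplying it with a power of `∑ i, X i ^ 2`. -/
noncomputable def oddForm (d : ℕ) (p : MvPolynomial σ R) : MvPolynomial σ R :=
  ∑ m ∈ Finset.range (d + 1) with Odd m,
    homogeneousComponent m p * (∑ i, X i ^ 2) ^ ((d - m) / 2)

theorem isHomogeneous_oddForm {d : ℕ} (hd : Odd d) (p : MvPolynomial σ R) :
    (oddForm d p).IsHomogeneous d := by
  refine IsHomogeneous.sum _ _ _ fun m hm => ?_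
  obtain ⟨hmd, hodd⟩ := Finset.mem_filter.mp hm
  have hdeg : m + 2 * ((d - m) / 2) = d := by
    grind
  have hnorm : (∑ i, X i ^ 2 : MvPolynomial σ R).IsHomogeneous 2 :=
    IsHomogeneous.sum _ _ _ fun i _ => isHomogeneous_X_pow i 2
  simpa only [hdeg] using (homogeneousComponent_isHomogeneous m p).mul (hnorm.pow ((d - m) / 2))

theorem two_mul_eval_oddForm {d : ℕ} {p : MvPolynomial σ R} (hp : p.totalDegree ≤ d)
    {x : σ → R} (hx : ∑ i, x i ^ 2 = 1) :
    2 * eval x (oddForm d p) = eval x p - eval (-x) p := by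
  rw [eval_eq_sum_homogeneousComponent hp, eval_eq_sum_homogeneousComponent hp,
    ← Finset.sum_sub_distrib, oddForm, map_sum, Finset.mul_sum, Finset.sum_filter]
  refine Finset.sum_congr rfl fun m _ => ?_
  rw [← neg_one_smul R x, eval_smul_of_isHomogeneous (homogeneousComponent_isHomogeneous m p)]
  split_ifs with hm
  · simp only [map_mul, map_pow, map_sum, eval_X, hx, one_pow, hm.neg_one_pow]
    ring
  · rw [(Nat.not_odd_iff_even.mp hm).neg_one_pow, one_mul, sub_self]

end OddPart

theorem exists_mvPolynomial_forall_abs_eval_sub_lt {X σ : Type*} [TopologicalSpace X] {K : Set X}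
    (hK : IsCompact K) {c : X → σ → ℝ} (hc : ContinuousOn c K) (hinj : Set.InjOn c K)
    {f : X → ℝ} (hf : ContinuousOn f K) {ε : ℝ} (hε : 0 < ε) :
    ∃ p : MvPolynomial σ ℝ, ∀ x ∈ K, |eval (c x) p - f x| < ε := by
  have : CompactSpace K := isCompact_iff_compactSpace.mp hK
  let φ : MvPolynomial σ ℝ →ₐ[ℝ] C(K, ℝ) :=
    aeval fun i => ⟨fun x => c x i, (continuous_apply i).comp hc.domRestrict⟩
  have hφ (p : MvPolynomial σ ℝ) (x : K) : φ p x = eval (c x) p :=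
    comp_aeval_apply _ (ContinuousMap.evalAlgHom ℝ ℝ x) p
  have hsep : φ.range.SeparatesPoints := fun x y hxy => by
    obtain ⟨i, hi⟩ := Function.ne_iff.mp (hinj.ne x.2 y.2 (Subtype.coe_ne_coe.mpr hxy))
    refine ⟨_, ⟨φ (.X i), ⟨.X i, rfl⟩, rfl⟩, ?_⟩
    simpa only [hφ, eval_X] using hi
  obtain ⟨⟨_, p, rfl⟩, hp⟩ :=
    ContinuousMap.exists_mem_subalgebra_near_continuous_of_separatesPoints φ.range hsep _
      hf.domRestrict ε hε
  exact ⟨p, fun x hx => by simpa [hφ] using hp ⟨x, hx⟩⟩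

section BorsukUlam

variable {n : ℕ}

theorem exists_mem_sphere_forall_abs_lt_of_odd
    {h : EuclideanSpace ℝ (Fin (n + 1)) → Fin n → ℝ} (hh : ContinuousOn h (Metric.sphere 0 1))
    (hodd : ∀ x ∈ Metric.sphere 0 1, h (-x) = -h x) {ε : ℝ} (hε : 0 < ε) :
    ∃ x ∈ Metric.sphere 0 1, ∀ i, |h x i| < ε := by
  choose p hp using fun i => exists_mvPolynomial_forall_abs_eval_sub_lt (isCompact_sphere 0 1)
    (PiLp.continuous_ofLp 2 _).continuousOn (WithLp.ofLp_injective 2).injOn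
    (continuousOn_pi.mp hh i) hε
  let d := 2 * ∑ i, (p i).totalDegree + 1
  have hd : Odd d := odd_two_mul_add_one _
  have hpd (i) : (p i).totalDegree ≤ d := by
    have := Finset.single_le_sum (f := fun i => (p i).totalDegree) (fun _ _ => Nat.zero_le _)
      (Finset.mem_univ i)
    omega
  obtain ⟨x, hx, hzero⟩ := exists_mem_sphere_forall_eval_eq_zero hd
    fun i => isHomogeneous_oddForm hd (p i)
  have hnorm : ∑ i, x i ^ 2 = 1 := by
    rw [← EuclideanSpace.real_norm_sq_eq, mem_sphere_zero_iff_norm.mp hx, one_pow]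
  refine ⟨x, hx, fun i => ?_⟩
  have heven : eval x.ofLp (p i) = eval (-x).ofLp (p i) := by
    rw [← sub_eq_zero, WithLp.ofLp_neg, ← two_mul_eval_oddForm (hpd i) hnorm, hzero, mul_zero]
  have hpos := abs_lt.mp (hp i x hx)
  have hneg := abs_lt.mp (hp i (-x) (by simpa using hx))
  rw [← heven, hodd x hx, Pi.neg_apply] at hneg
  exact abs_lt.mpr ⟨by linarith, by linarith⟩

theorem exists_mem_sphere_eq_zero_of_odd
    {h : EuclideanSpace ℝ (Fin (n + 1)) → Fin n → ℝ} (hh : ContinuousOn h (Metric.sphere 0 1))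
    (hodd : ∀ x ∈ Metric.sphere 0 1, h (-x) = -h x) : ∃ x ∈ Metric.sphere 0 1, h x = 0 :=
  exists_eq_zero_of_forall_exists_norm_lt (isCompact_sphere 0 1) hh fun ε hε => by
    obtain ⟨x, hx, hlt⟩ := exists_mem_sphere_forall_abs_lt_of_odd hh hodd hε
    exact ⟨x, hx, (pi_norm_lt_iff hε).mpr hlt⟩

theorem borsuk_ulam {f : EuclideanSpace ℝ (Fin (n + 1)) → Fin n → ℝ}
    (hf : ContinuousOn f (Metric.sphere 0 1)) : ∃ x ∈ Metric.sphere 0 1, f x = f (-x) := by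
  have hneg : ContinuousOn (fun x => f (-x)) (Metric.sphere 0 1) :=
    hf.comp continuous_neg.continuousOn fun x hx => by simpa using hx
  obtain ⟨x, hx, h⟩ := exists_mem_sphere_eq_zero_of_odd (hf.sub hneg) fun x _ => by
    simp only [Pi.sub_apply, neg_neg, neg_sub]
  exact ⟨x, hx, sub_eq_zero.mp h⟩

end BorsukUlam

/-- **Region-based Borsuk–Ulam.** For `n ≥ 1` and a continuous `f : S^n → ℝ^n`,
there is a nonempty region `A ⊆ S^n` disjoint from its antipodal region `-A`
(so `A, -A` are antipodal regions) with `f '' A = f '' (-A)`. -/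
theorem region_borsuk_ulam (n : ℕ) (hn : 1 ≤ n)
    (f : EuclideanSpace ℝ (Fin (n + 1)) → EuclideanSpace ℝ (Fin n))
    (hf : ContinuousOn f (Metric.sphere (0 : EuclideanSpace ℝ (Fin (n + 1))) 1)) :
    ∃ A : Set (EuclideanSpace ℝ (Fin (n + 1))),
      A ⊆ Metric.sphere (0 : EuclideanSpace ℝ (Fin (n + 1))) 1 ∧
      A.Nonempty ∧ Disjoint A (-A) ∧ f '' A = f '' (-A) := by
  obtain ⟨x, hx, hfx⟩ := borsuk_ulam ((PiLp.continuous_ofLp 2 _).comp_continuousOn hf)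
  refine ⟨{x}, Set.singleton_subset_iff.mpr hx, Set.singleton_nonempty x, ?_, ?_⟩
  · rw [Set.neg_singleton, Set.disjoint_singleton]
    exact fun h => ne_neg_of_mem_unit_sphere ℝ
      (⟨x, hx⟩ : Metric.sphere (0 : EuclideanSpace ℝ (Fin (n + 1))) 1) (Subtype.ext h)
  · rw [Set.neg_singleton, Set.image_singleton, Set.image_singleton,
      WithLp.ofLp_injective 2 hfx]
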